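/- arXiv:2602.04558 — 3 statements merged into one kernel-verified Lean document; each statement's English description precedes it below -/
import Mathlib

section
/- Let q be a prime power and let m, n be positive integers, and let τ denote the cyclic shift operator on 𝔽_q^{mn}. If h_q(mn) = 0, then h_{τ^m}(𝔽_q^{mn}) = 0, and hence h_{q^m}(n) = 0. More generally, if h_q(mn) ≤ m − 1, then h_{q^m}(n) = 0. -/
noncomputable section

/-- The cyclic shift operator on `Fin n → F`, sending `(a_0, …, a_{n-1})`
to `(a_{n-1}, a_0, …, a_{n-2})`. -/
def cshift (F : Type*) [Field F] (n : ℕ) : (Fin n → F) →ₗ[F] (Fin n → F) where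
  toFun a := a ∘ (finRotate n).symm
  map_add' _ _ := rfl
  map_smul' _ _ := rfl

/-- A subspace `U ⊆ F^n` is cyclically covering if the union of its cyclic shifts is `F^n`. -/
def IsCyclicallyCovering {F : Type*} [Field F] {n : ℕ} (U : Submodule F (Fin n → F)) : Prop :=
  ⋃ i ∈ Finset.range n, ⇑(cshift F n ^ i) '' (U : Set (Fin n → F)) = Set.univ

/-- `hcc F n` is the largest possible codimension of a cyclically covering subspace of `F^n`. -/
def hcc (F : Type*) [Field F] (n : ℕ) : ℕ :=
  sSup {k : ℕ | ∃ U : Submodule F (Fin n → F),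
    IsCyclicallyCovering U ∧ n - Module.finrank F U = k}

/-- `hTauM F m n` is the largest possible codimension of a subspace `U ⊆ F^{mn}` with
`⋃_{k=0}^{n-1} (τ^m)^k(U) = F^{mn}`, where `τ` is the cyclic shift on `F^{mn}`. -/
def hTauM (F : Type*) [Field F] (m n : ℕ) : ℕ :=
  sSup {k : ℕ | ∃ U : Submodule F (Fin (m * n) → F),
    (⋃ j ∈ Finset.range n,
      ⇑(cshift F (m * n) ^ (m * j)) '' (U : Set (Fin (m * n) → F))) = Set.univ ∧
    m * n - Module.finrank F U = k}

/-!
A basis of the degree `m` extension `K` of `F` identifies `K ^ n` with `F ^ (m n)`, writing the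
coordinates of each entry as a block of length `m`. Shifting by one entry in `K ^ n` becomes
shifting by `m` positions in `F ^ (m n)`, and codimensions over `F` are `m` times those over `K`.
Since shifts by multiples of `m` are among all shifts,
`m * h_K(n) ≤ h_{τ^m}(F ^ (m n)) ≤ h_F(m n)`.
-/

open Function Module

/-- The translates `f^[k] '' s` of `s`, for `k < n`, cover the ambient type. This is the covering
condition for an arbitrary self-map in place of a (power of a) cyclic shift. -/
def IterateCovers {α : Type*} (f : α → α) (n : ℕ) (s : Set α) : Prop :=
  ∀ x, ∃ k < n, x ∈ f^[k] '' s

namespace IterateCovers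

variable {α β : Type*} {f : α → α} {n : ℕ} {s : Set α}

theorem image {g : β → β} {e : α → β} (hs : IterateCovers f n s) (hfg : Semiconj e f g)
    (he : Surjective e) : IterateCovers g n (e '' s) := by
  intro y
  obtain ⟨x, rfl⟩ := he y
  obtain ⟨k, hk, a, ha, rfl⟩ := hs x
  exact ⟨k, hk, e a, Set.mem_image_of_mem e ha, (hfg.iterate_right k a).symm⟩

theorem of_iterate {m : ℕ} (hm : 0 < m) (hs : IterateCovers f^[m] n s) :
    IterateCovers f (m * n) s := by
  intro x
  obtain ⟨k, hk, hx⟩ := hs x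
  exact ⟨m * k, Nat.mul_lt_mul_of_pos_left hk hm, by rwa [iterate_mul]⟩

end IterateCovers

section Codimension

variable {F : Type*} [Field F] {m n : ℕ}

theorem isCyclicallyCovering_iff {U : Submodule F (Fin n → F)} :
    IsCyclicallyCovering U ↔ IterateCovers (cshift F n) n (U : Set (Fin n → F)) := by
  simp only [IsCyclicallyCovering, IterateCovers, Set.eq_univ_iff_forall, Set.mem_iUnion,
    Finset.mem_range, exists_prop, Module.End.coe_pow]

theorem iUnion_cshift_pow_mul_eq_univ_iff {U : Submodule F (Fin (m * n) → F)} :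
    ⋃ j ∈ Finset.range n, ⇑(cshift F (m * n) ^ (m * j)) '' (U : Set (Fin (m * n) → F)) = Set.univ ↔
      IterateCovers (cshift F (m * n))^[m] n (U : Set (Fin (m * n) → F)) := by
  simp only [IterateCovers, Set.eq_univ_iff_forall, Set.mem_iUnion, Finset.mem_range, exists_prop,
    Module.End.coe_pow, iterate_mul]

theorem codim_le_hcc {U : Submodule F (Fin n → F)}
    (hU : IterateCovers (cshift F n) n (U : Set (Fin n → F))) : n - finrank F U ≤ hcc F n :=
  le_csSup ⟨n, by rintro _ ⟨V, -, rfl⟩; exact Nat.sub_le _ _⟩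
    ⟨U, isCyclicallyCovering_iff.2 hU, rfl⟩

theorem codim_le_hTauM {U : Submodule F (Fin (m * n) → F)}
    (hU : IterateCovers (cshift F (m * n))^[m] n (U : Set (Fin (m * n) → F))) :
    m * n - finrank F U ≤ hTauM F m n :=
  le_csSup ⟨m * n, by rintro _ ⟨V, -, rfl⟩; exact Nat.sub_le _ _⟩
    ⟨U, iUnion_cshift_pow_mul_eq_univ_iff.2 hU, rfl⟩

theorem hcc_le {d : ℕ} (h : ∀ U : Submodule F (Fin n → F),
    IterateCovers (cshift F n) n (U : Set (Fin n → F)) → n - finrank F U ≤ d) : hcc F n ≤ d := by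
  refine csSup_le' ?_
  rintro _ ⟨U, hU, rfl⟩
  exact h U (isCyclicallyCovering_iff.1 hU)

theorem hTauM_le {d : ℕ} (h : ∀ U : Submodule F (Fin (m * n) → F),
    IterateCovers (cshift F (m * n))^[m] n (U : Set (Fin (m * n) → F)) →
      m * n - finrank F U ≤ d) : hTauM F m n ≤ d := by
  refine csSup_le' ?_
  rintro _ ⟨U, hU, rfl⟩
  exact h U (iUnion_cshift_pow_mul_eq_univ_iff.1 hU)

theorem hTauM_le_hcc (hm : 0 < m) : hTauM F m n ≤ hcc F (m * n) :=
  hTauM_le fun _ hU ↦ codim_le_hcc (hU.of_iterate hm)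

end Codimension

section Rotation

theorem val_finRotate_iterate {n : ℕ} (k : ℕ) (i : Fin n) :
    ((finRotate n)^[k] i).val = (i.val + k) % n := by
  have := i.neZero
  induction k with
  | zero => simp [Nat.mod_eq_of_lt i.isLt]
  | succ k ih =>
    rw [iterate_succ_apply', finRotate_apply, Fin.val_add, ih, Fin.val_one', ← Nat.add_mod,
      add_assoc]

/-- Position in `Fin (m * n)` of the `j`-th index in the `i`-th of `n` blocks of length `m`. -/
def blockEquiv (m n : ℕ) : Fin n × Fin m ≃ Fin (m * n) :=
  finProdFinEquiv.trans (finCongr (mul_comm n m))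

variable {m n : ℕ}

theorem val_blockEquiv (i : Fin n) (j : Fin m) :
    (blockEquiv m n (i, j)).val = j.val + m * i.val := rfl

theorem finRotate_iterate_blockEquiv (i : Fin n) (j : Fin m) :
    (finRotate (m * n))^[m] (blockEquiv m n (i, j)) = blockEquiv m n (finRotate n i, j) := by
  have hi : (finRotate n i).val = (i.val + 1) % n := val_finRotate_iterate 1 i
  refine Fin.ext ?_
  calc ((finRotate (m * n))^[m] (blockEquiv m n (i, j))).val
      = (j.val + m * (i.val + 1)) % (m * n) := by
        rw [val_finRotate_iterate, val_blockEquiv, mul_add_one, add_assoc]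
    _ = j.val + m * ((i.val + 1) % n) := by
        rw [Nat.mod_mul, Nat.add_mul_mod_self_left, Nat.mod_eq_of_lt j.isLt,
          Nat.add_mul_div_left _ _ j.pos, Nat.div_eq_of_lt j.isLt, zero_add]
    _ = (blockEquiv m n (finRotate n i, j)).val := by rw [val_blockEquiv, hi]

theorem cshift_iterate_apply_finRotate_iterate {F : Type*} [Field F] (k : ℕ) (a : Fin n → F)
    (i : Fin n) : (cshift F n)^[k] a ((finRotate n)^[k] i) = a i := by
  induction k with
  | zero => rfl
  | succ k ih =>
    rw [iterate_succ_apply', iterate_succ_apply']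
    exact (congrArg _ ((finRotate n).symm_apply_apply _)).trans ih

end Rotation

section RestrictScalars

variable {F K : Type*} [Field F] [Field K] [Algebra F K] {m : ℕ}

/-- The `F`-linear identification of `K ^ n` with `F ^ (m n)` replacing each entry by the block of
its coordinates in the basis `b`. -/
def blockCoord (b : Basis (Fin m) F K) (n : ℕ) : (Fin n → K) ≃ₗ[F] (Fin (m * n) → F) :=
  LinearEquiv.piCongrRight (fun _ ↦ b.equivFun) ≪≫ₗ (LinearEquiv.curry F F (Fin n) (Fin m)).symm ≪≫ₗ
    LinearEquiv.funCongrLeft F F (blockEquiv m n).symm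

variable (b : Basis (Fin m) F K) {n : ℕ}

theorem blockCoord_apply_blockEquiv (x : Fin n → K) (i : Fin n) (j : Fin m) :
    blockCoord b n x (blockEquiv m n (i, j)) = b.repr (x i) j := by
  simp [blockCoord, LinearEquiv.funCongrLeft_apply, LinearMap.funLeft_apply]

theorem semiconj_blockCoord_cshift :
    Semiconj (blockCoord b n) (cshift K n) (cshift F (m * n))^[m] := by
  intro x
  ext t
  obtain ⟨⟨i', j⟩, rfl⟩ := (blockEquiv m n).surjective t
  obtain ⟨i, rfl⟩ := (finRotate n).surjective i'
  calc blockCoord b n (cshift K n x) (blockEquiv m n (finRotate n i, j))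
      = b.repr (x i) j := by
        rw [blockCoord_apply_blockEquiv]
        exact congrArg (b.repr · j) (cshift_iterate_apply_finRotate_iterate 1 x i)
    _ = (cshift F (m * n))^[m] (blockCoord b n x) (blockEquiv m n (finRotate n i, j)) := by
        rw [← finRotate_iterate_blockEquiv, cshift_iterate_apply_finRotate_iterate,
          blockCoord_apply_blockEquiv]

theorem finrank_mul_hcc_le_hTauM [FiniteDimensional F K] :
    finrank F K * hcc K n ≤ hTauM F (finrank F K) n := by
  rw [mul_comm, ← Nat.le_div_iff_mul_le finrank_pos]
  refine hcc_le fun U hU ↦ ?_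
  rw [Nat.le_div_iff_mul_le finrank_pos]
  let e := blockCoord (finBasis F K) n
  let W : Submodule F (Fin (finrank F K * n) → F) := (U.restrictScalars F).map e.toLinearMap
  have hW : IterateCovers (cshift F (finrank F K * n))^[finrank F K] n (W : Set _) :=
    hU.image (semiconj_blockCoord_cshift (finBasis F K)) e.surjective
  have hdim : finrank F W = finrank F K * finrank K U :=
    (e.finrank_map_eq (U.restrictScalars F)).trans (finrank_mul_finrank F K U).symm
  calc (n - finrank K U) * finrank F K
      = finrank F K * n - finrank F W := by rw [hdim, ← Nat.mul_sub, mul_comm]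
    _ ≤ hTauM F (finrank F K) n := codim_le_hTauM hW

end RestrictScalars

theorem exists_algebra_finrank_eq {F K : Type*} [Field F] [Finite F] [Field K] {m : ℕ}
    (h : Nat.card K = Nat.card F ^ m) : ∃ _ : Algebra F K, finrank F K = m := by
  have : Finite K := Nat.finite_of_card_ne_zero (h ▸ pow_ne_zero m Nat.card_pos.ne')
  have : NeZero m := ⟨by rintro rfl; exact Finite.one_lt_card.ne' (h.trans (pow_zero _))⟩
  obtain ⟨p, _⟩ := CharP.exists F
  have : Fact p.Prime := ⟨CharP.char_is_prime F p⟩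
  have : Fintype K := .ofFinite K
  have : Fintype (FiniteField.Extension F p m) := .ofFinite _
  let e : FiniteField.Extension F p m ≃+* K := FiniteField.ringEquivOfCardEq <| by
    rw [Fintype.card_eq_nat_card, Fintype.card_eq_nat_card, FiniteField.natCard_extension, h]
  let : Algebra F K := (e.toRingHom.comp (algebraMap F _)).toAlgebra
  exact ⟨this, Nat.pow_right_injective (Finite.one_lt_card : 2 ≤ Nat.card F)
    (natCard_eq_pow_finrank.symm.trans h)⟩

theorem stmt17_general (F K : Type*) [Field F] [Field K] [Algebra F K] [FiniteDimensional F K]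
    (n : ℕ) :
    finrank F K * hcc K n ≤ hTauM F (finrank F K) n ∧
      hTauM F (finrank F K) n ≤ hcc F (finrank F K * n) :=
  ⟨finrank_mul_hcc_le_hTauM, hTauM_le_hcc finrank_pos⟩

theorem hcc_eq_zero_of_hcc_lt_finrank (F : Type*) {K : Type*} [Field F] [Field K] [Algebra F K]
    [FiniteDimensional F K] {n : ℕ} (h : hcc F (finrank F K * n) < finrank F K) : hcc K n = 0 := by
  have ⟨hK, hτ⟩ := stmt17_general F K n
  exact Nat.lt_one_iff.1 (Nat.lt_of_mul_lt_mul_left (a := finrank F K) (by omega))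

/-- Let `q` be a prime power and `m, n` positive integers, and let `K` be the field with
`q^m` elements.  If `h_q(mn) = 0`, then `h_{τ^m}(𝔽_q^{mn}) = 0` and hence
`h_{q^m}(n) = 0`.  More generally, if `h_q(mn) ≤ m - 1`, then `h_{q^m}(n) = 0`. -/
theorem stmt17 (F K : Type*) [Field F] [Fintype F] [Field K] [Fintype K]
    (m n : ℕ) (hm : 0 < m) (hn : 0 < n)
    (hcardK : Fintype.card K = Fintype.card F ^ m) :
    (hcc F (m * n) = 0 → hTauM F m n = 0 ∧ hcc K n = 0) ∧
    (hcc F (m * n) ≤ m - 1 → hcc K n = 0) := by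
  obtain ⟨_, rfl⟩ := exists_algebra_finrank_eq (F := F) (K := K) (by simpa using hcardK)
  exact ⟨fun h ↦ ⟨Nat.eq_zero_of_le_zero (h ▸ (stmt17_general F K n).2),
    hcc_eq_zero_of_hcc_lt_finrank F (by omega)⟩, fun h ↦ hcc_eq_zero_of_hcc_lt_finrank F (by omega)⟩
end
end

section
/- Let d be a nonnegative integer. If n = 3 or n = 2^d, then h_4(n) = 0; that is, the only cyclically covering subspace of 𝔽_4^n is the whole space. -/
/-!
Let `T` be the cyclic shift, `U` a covering subspace, and `K` the largest `T`-invariant subspace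
contained in `U`. If `U` is proper then `T` acts on the nonzero quotient by `K`, where it is
annihilated by `X ^ n - 1`; if that polynomial splits, there is an eigenvector, the class of some
`u ∉ K`, with nonzero eigenvalue `a`. Now `T ^ i u ≡ a ^ i u` modulo `K ≤ U`, so either every
shift of `u` lies in `U` or none does. The former would put `u` in `K`, and the latter contradicts
covering.

Over `𝔽_4` the polynomial `X ^ 3 - 1` divides `X ^ 4 - X`, while
`X ^ (2 ^ d) - 1 = (X - 1) ^ (2 ^ d)`.
-/

noncomputable section

section Endomorphism

open Polynomial Module.End

variable {F V : Type*} [Field F] [AddCommGroup V] [Module F V]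

theorem exists_isRoot_hasEigenvalue_of_splits [Module.Finite F V] [Nontrivial V]
    {T : Module.End F V} {p : F[X]} (hp : p.Splits) (hp0 : p ≠ 0) (hT : aeval T p = 0) :
    ∃ a, p.IsRoot a ∧ T.HasEigenvalue a := by
  have hdvd : minpoly F T ∣ p := minpoly.dvd F T hT
  have hdeg : (minpoly F T).degree ≠ 0 :=
    (minpoly.degree_pos (Algebra.IsIntegral.isIntegral T)).ne'
  obtain ⟨a, ha⟩ := (hp.of_dvd hp0 hdvd).exists_eval_eq_zero hdeg
  exact ⟨a, IsRoot.dvd ha hdvd, hasEigenvalue_of_isRoot ha⟩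

theorem aeval_mapQ_mkQ {T : Module.End F V} {K : Submodule F V} (hK : K ≤ K.comap T)
    (p : F[X]) (v : V) : aeval (K.mapQ K T hK) p (K.mkQ v) = K.mkQ (aeval T p v) := by
  induction p using Polynomial.induction_on' with
  | add p q hp hq => simp only [map_add, LinearMap.add_apply, hp, hq]
  | monomial i a => simp [aeval_monomial, ← Submodule.mapQ_pow K hK]

/-- The largest `T`-invariant subspace contained in `U`, encoded as the set of vectors whose whole
forward orbit under `T` stays in `U`. -/
def invariantCore (T : Module.End F V) (U : Submodule F V) : Submodule F V :=
  ⨅ i : ℕ, U.comap (T ^ i)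

theorem mem_invariantCore {T : Module.End F V} {U : Submodule F V} {v : V} :
    v ∈ invariantCore T U ↔ ∀ i : ℕ, (T ^ i) v ∈ U := by
  simp only [invariantCore, Submodule.mem_iInf, Submodule.mem_comap]

theorem invariantCore_le (T : Module.End F V) (U : Submodule F V) : invariantCore T U ≤ U :=
  fun _ hv => mem_invariantCore.1 hv 0

theorem invariantCore_le_comap (T : Module.End F V) (U : Submodule F V) :
    invariantCore T U ≤ (invariantCore T U).comap T :=
  fun _ hv => mem_invariantCore.2 fun i => mem_invariantCore.1 hv (i + 1)

theorem pow_apply_mem_iff_of_hasEigenvector_mapQ {T : Module.End F V} {K U : Submodule F V}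
    (hK : K ≤ K.comap T) (hKU : K ≤ U) {a : F} (ha : a ≠ 0) {u : V}
    (hu : HasEigenvector (K.mapQ K T hK) a (K.mkQ u)) (i : ℕ) : (T ^ i) u ∈ U ↔ u ∈ U := by
  have hpow : K.mkQ ((T ^ i) u) = K.mkQ (a ^ i • u) := by
    simpa [← Submodule.mapQ_pow K hK] using hu.pow_apply i
  have hsub : (T ^ i) u - a ^ i • u ∈ U := hKU ((Submodule.Quotient.eq K).1 hpow)
  rw [← U.smul_mem_iff (pow_ne_zero i ha) (x := u)]
  exact ⟨fun h => (U.sub_mem_iff_right h).1 hsub, fun h => (U.sub_mem_iff_left h).1 hsub⟩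

theorem eq_top_of_forall_exists_pow_apply_mem [Module.Finite F V] {T : Module.End F V} {p : F[X]}
    (hp : p.Splits) (hp0 : p.eval 0 ≠ 0) (hT : aeval T p = 0) {U : Submodule F V}
    (hU : ∀ v, ∃ i : ℕ, (T ^ i) v ∈ U) : U = ⊤ := by
  by_contra hne
  let K := invariantCore T U
  have hK : K ≤ K.comap T := invariantCore_le_comap T U
  have hKU : K ≤ U := invariantCore_le T U
  have : Nontrivial (V ⧸ K) :=
    Submodule.Quotient.nontrivial_iff.2 (ne_top_of_le_ne_top hne hKU)
  have hquot : aeval (K.mapQ K T hK) p = 0 :=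
    K.linearMap_qext <| LinearMap.ext fun v => by simp [-Submodule.mkQ_apply, aeval_mapQ_mkQ, hT]
  obtain ⟨a, hroot, heigen⟩ :=
    exists_isRoot_hasEigenvalue_of_splits hp (by rintro rfl; simp at hp0) hquot
  have ha : a ≠ 0 := by rintro rfl; exact hp0 hroot
  obtain ⟨w, hw⟩ := heigen.exists_hasEigenvector
  obtain ⟨u, rfl⟩ := K.mkQ_surjective w
  have horbit := pow_apply_mem_iff_of_hasEigenvector_mapQ hK hKU ha hw
  obtain ⟨i, hi⟩ := hU u
  have huK : u ∈ K := mem_invariantCore.2 fun j => (horbit j).2 ((horbit i).1 hi)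
  exact hw.2 ((Submodule.Quotient.mk_eq_zero K).2 huK)

end Endomorphism

section CyclicShift

open Polynomial

theorem finRotate_pow_self (n : ℕ) : finRotate n ^ n = 1 := by
  rcases lt_or_ge n 2 with hn | hn
  · have : Subsingleton (Fin n) := Fin.subsingleton_iff_le_one.2 (by lia)
    exact Subsingleton.elim _ _
  · have horder : orderOf (finRotate n) = n := by
      rw [(isCycle_finRotate_of_le hn).orderOf, support_finRotate_of_le hn, Finset.card_univ,
        Fintype.card_fin]
    simpa only [horder] using pow_orderOf_eq_one (finRotate n)

variable {F : Type*} [Field F] {n : ℕ}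

theorem cshift_pow_apply (k : ℕ) (a : Fin n → F) :
    (cshift F n ^ k) a = a ∘ (finRotate n ^ k).symm := by
  induction k with
  | zero => rfl
  | succ k ih =>
    rw [pow_succ', Module.End.mul_apply, ih, pow_succ']
    rfl

theorem cshift_pow_self : cshift F n ^ n = 1 := by
  refine LinearMap.ext fun a => ?_
  rw [cshift_pow_apply, finRotate_pow_self]
  rfl

theorem IsCyclicallyCovering.exists_pow_apply_mem {U : Submodule F (Fin n → F)}
    (hU : IsCyclicallyCovering U) (v : Fin n → F) : ∃ i : ℕ, (cshift F n ^ i) v ∈ U := by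
  have hv : v ∈ ⋃ i ∈ Finset.range n, ⇑(cshift F n ^ i) '' (U : Set (Fin n → F)) :=
    hU.symm ▸ Set.mem_univ v
  simp only [Set.mem_iUnion, Finset.mem_range] at hv
  obtain ⟨i, hi, y, hy, rfl⟩ := hv
  refine ⟨n - i, ?_⟩
  rwa [← Module.End.mul_apply, ← pow_add, Nat.sub_add_cancel hi.le, cshift_pow_self]

theorem hcc_eq_zero (h : ∀ U : Submodule F (Fin n → F), IsCyclicallyCovering U → U = ⊤) :
    hcc F n = 0 := by
  refine Nat.le_zero.1 (csSup_le' ?_)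
  rintro k ⟨U, hU, rfl⟩
  rw [h U hU, finrank_top, Module.finrank_fin_fun, Nat.sub_self]

theorem stmt18_general (hn : n ≠ 0) (hsplits : (X ^ n - 1 : F[X]).Splits) :
    hcc F n = 0 ∧ ∀ U : Submodule F (Fin n → F), IsCyclicallyCovering U → U = ⊤ := by
  have htop (U : Submodule F (Fin n → F)) (hU : IsCyclicallyCovering U) : U = ⊤ :=
    eq_top_of_forall_exists_pow_apply_mem hsplits (by simp [hn]) (by simp [cshift_pow_self])
      hU.exists_pow_apply_mem
  exact ⟨hcc_eq_zero htop, htop⟩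

end CyclicShift

section FiniteField

open Polynomial

variable {F : Type*} [Field F]

theorem splits_X_pow_sub_one_of_dvd_card_sub_one [Fintype F] {m : ℕ}
    (hm : m ∣ Fintype.card F - 1) : (X ^ m - 1 : F[X]).Splits := by
  have hfactor : (X ^ Fintype.card F - X : F[X]) = (X ^ (Fintype.card F - 1) - 1) * X := by
    rw [sub_mul, one_mul, pow_sub_one_mul Fintype.card_ne_zero]
  have hsplits : (X ^ Fintype.card F - X : F[X]).Splits := by
    simpa only [Nat.card_eq_fintype_card] using splits_X_pow_nat_card_sub_X (K := F)
  have hdvd : (X ^ m - 1 : F[X]) ∣ X ^ (Fintype.card F - 1) - 1 := dvd_pow_sub_one_of_dvd hm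
  exact hsplits.of_dvd (FiniteField.X_pow_card_sub_X_ne_zero F Fintype.one_lt_card)
    (hfactor ▸ hdvd.mul_right X)

theorem splits_X_pow_mul_expChar_pow_sub_one (p : ℕ) [ExpChar F p] {m : ℕ}
    (hm : (X ^ m - 1 : F[X]).Splits) (d : ℕ) : (X ^ (m * p ^ d) - 1 : F[X]).Splits := by
  have hfactor : (X ^ (m * p ^ d) - 1 : F[X]) = (X ^ m - 1) ^ p ^ d := by
    rw [sub_pow_expChar_pow, one_pow, pow_mul]
  exact hfactor ▸ hm.pow (p ^ d)

theorem splits_X_pow_sub_one_of_card_eq_four [Fintype F] (hcard : Fintype.card F = 4) {d n : ℕ}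
    (hn : n = 3 ∨ n = 2 ^ d) : (X ^ n - 1 : F[X]).Splits := by
  rcases hn with rfl | rfl
  · exact splits_X_pow_sub_one_of_dvd_card_sub_one (by rw [hcard])
  · have : CharP F 2 := charP_of_card_eq_prime_pow (f := 2) hcard
    have hone : (X ^ 1 - 1 : F[X]).Splits :=
      splits_X_pow_sub_one_of_dvd_card_sub_one (one_dvd _)
    simpa only [one_mul] using splits_X_pow_mul_expChar_pow_sub_one 2 hone d

end FiniteField

/-- Let `d` be a nonnegative integer.  If `n = 3` or `n = 2^d`, then `h_4(n) = 0`;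
that is, the only cyclically covering subspace of `𝔽_4^n` is the whole space. -/
theorem stmt18 (F : Type*) [Field F] [Fintype F] (hcard : Fintype.card F = 4)
    (d n : ℕ) (hn : n = 3 ∨ n = 2 ^ d) :
    hcc F n = 0 ∧ ∀ U : Submodule F (Fin n → F), IsCyclicallyCovering U → U = ⊤ := by
  have hn0 : n ≠ 0 := by rcases hn with rfl | rfl <;> positivity
  exact stmt18_general hn0 (splits_X_pow_sub_one_of_card_eq_four hcard hn)
end
end

section
/- Let q be a power of an odd prime, let n be an odd positive integer, and let t be a positive integer. If h_q(n) = 0, then h_{q^{2^t}}(n) = 0. -/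
noncomputable section

/-!
Let `K / F` be a field extension and `U ⊆ K^n` cyclically covering. The shift preserves `F^n ⊆ K^n`,
so every shift of `U` meets `F^n` in the corresponding shift of `U ∩ F^n`, and `U ∩ F^n` is
cyclically covering in `F^n`. Vectors of `F^n` independent over `F` stay independent over `K`, so
`U ∩ F^n` has at least the codimension of `U`. Hence `h_K(n) ≤ h_F(n)`.
-/

section Covering

variable {F : Type*} [Field F] {n : ℕ}

theorem cshift_bijective : Function.Bijective (cshift F n) :=
  ((finRotate n).arrowCongr (Equiv.refl F)).bijective

theorem isCyclicallyCovering_iff_s19 {U : Submodule F (Fin n → F)} :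
    IsCyclicallyCovering U ↔ ∀ a, ∃ i < n, ∃ u ∈ U, (cshift F n)^[i] u = a := by
  simp only [IsCyclicallyCovering, Set.eq_univ_iff_forall, Set.mem_iUnion, Finset.mem_range,
    Set.mem_image, SetLike.mem_coe, Module.End.coe_pow, exists_prop]

theorem isCyclicallyCovering_top (hn : 0 < n) :
    IsCyclicallyCovering (⊤ : Submodule F (Fin n → F)) :=
  isCyclicallyCovering_iff_s19.2 fun a ↦ ⟨0, hn, a, Submodule.mem_top, rfl⟩

theorem isGreatest_hcc (hn : 0 < n) :
    IsGreatest {k : ℕ | ∃ U : Submodule F (Fin n → F),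
      IsCyclicallyCovering U ∧ n - Module.finrank F U = k} (hcc F n) := by
  have hbdd : BddAbove {k : ℕ | ∃ U : Submodule F (Fin n → F),
      IsCyclicallyCovering U ∧ n - Module.finrank F U = k} := by
    refine ⟨n, ?_⟩
    rintro _ ⟨U, -, rfl⟩
    exact Nat.sub_le _ _
  exact ⟨Nat.sSup_mem ⟨_, ⊤, isCyclicallyCovering_top hn, rfl⟩ hbdd, fun _ hk ↦ le_csSup hbdd hk⟩

end Covering

section Extension

variable (F : Type*) {K : Type*} [Field F] [Field K] [Algebra F K]

/-- The `F`-rational points `U ∩ F^ι` of a subspace `U ⊆ K^ι`, as a subspace of `F^ι`; here `F^ι`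
is embedded in `K^ι` coordinatewise. -/
def rationalPoints {ι : Type*} (U : Submodule K (ι → K)) : Submodule F (ι → F) :=
  (U.restrictScalars F).comap (Pi.algebraMap ι F K)

variable {F} in
theorem mem_rationalPoints {ι : Type*} {U : Submodule K (ι → K)} {a : ι → F} :
    a ∈ rationalPoints F U ↔ Pi.algebraMap ι F K a ∈ U :=
  Iff.rfl

theorem finrank_rationalPoints_le {ι : Type*} [Finite ι] (U : Submodule K (ι → K)) :
    Module.finrank F (rationalPoints F U) ≤ Module.finrank K U := by
  let b := Module.finBasis F (rationalPoints F U)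
  have hb : LinearIndependent F fun i ↦ (b i : ι → F) :=
    b.linearIndependent.map' (rationalPoints F U).subtype (Submodule.ker_subtype _)
  let c i : U := ⟨Pi.algebraMap ι F K (b i), mem_rationalPoints.1 (b i).2⟩
  have hc : LinearIndependent K (U.subtype ∘ c) := linearIndependent_algebraMap_comp_iff.2 hb
  simpa only [Fintype.card_fin] using (LinearIndependent.of_comp _ hc).fintype_card_le_finrank

theorem semiconj_algebraMap_cshift (n : ℕ) :
    Function.Semiconj (Pi.algebraMap (Fin n) F K) (cshift F n) (cshift K n) :=
  fun _ ↦ rfl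

theorem IsCyclicallyCovering.rationalPoints {n : ℕ} {U : Submodule K (Fin n → K)}
    (hU : IsCyclicallyCovering U) : IsCyclicallyCovering (rationalPoints F U) := by
  rw [isCyclicallyCovering_iff_s19] at hU ⊢
  intro a
  obtain ⟨i, hi, u, hu, hua⟩ := hU (Pi.algebraMap (Fin n) F K a)
  obtain ⟨v, rfl⟩ := cshift_bijective.surjective.iterate i a
  have hvu : Pi.algebraMap (Fin n) F K v = u := by
    rw [((semiconj_algebraMap_cshift F n).iterate_right i).eq] at hua
    exact (cshift_bijective.injective.iterate i hua).symm
  exact ⟨i, hi, v, mem_rationalPoints.2 (hvu ▸ hu), rfl⟩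

end Extension

theorem nonempty_ringHom_of_card_eq_pow {F K : Type*} [Field F] [Fintype F] [Field K] [Fintype K]
    {m : ℕ} (h : Fintype.card K = Fintype.card F ^ m) : Nonempty (F →+* K) := by
  have hm : NeZero m := ⟨by rintro rfl; exact Fintype.one_lt_card.ne' (h.trans (pow_zero _))⟩
  obtain ⟨p, _⟩ := CharP.exists F
  have : Fact p.Prime := ⟨CharP.char_is_prime F p⟩
  let := Fintype.ofFinite (FiniteField.Extension F p m)
  have hcard : Fintype.card (FiniteField.Extension F p m) = Fintype.card K := by
    rw [h, Fintype.card_eq_nat_card, FiniteField.natCard_extension, Nat.card_eq_fintype_card]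
  exact ⟨(FiniteField.ringEquivOfCardEq hcard).toRingHom.comp (algebraMap F _)⟩

theorem stmt19_general (F K : Type*) [Field F] [Field K] [Algebra F K] {n : ℕ} (hn : 0 < n) :
    hcc K n ≤ hcc F n := by
  obtain ⟨U, hU, hcodim⟩ := (isGreatest_hcc (F := K) hn).1
  calc
    hcc K n = n - Module.finrank K U := hcodim.symm
    _ ≤ n - Module.finrank F (rationalPoints F U) :=
      Nat.sub_le_sub_left (finrank_rationalPoints_le F U) n
    _ ≤ hcc F n := (isGreatest_hcc hn).2 ⟨_, hU.rationalPoints F, rfl⟩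

/-- Let `q` be a power of an odd prime, `n` an odd positive integer, and `t` a positive
integer.  If `h_q(n) = 0`, then `h_{q^{2^t}}(n) = 0`.  (Here `K` is the field with
`q^{2^t}` elements.) -/
theorem stmt19 (F K : Type*) [Field F] [Fintype F] [Field K] [Fintype K]
    (hodd : Odd (Fintype.card F))
    (n : ℕ) (hn : 0 < n) (hnodd : Odd n)
    (t : ℕ) (ht : 0 < t)
    (hcardK : Fintype.card K = Fintype.card F ^ 2 ^ t)
    (h0 : hcc F n = 0) :
    hcc K n = 0 := by
  obtain ⟨_⟩ := (nonempty_ringHom_of_card_eq_pow hcardK).map RingHom.toAlgebra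
  exact Nat.le_zero.1 ((stmt19_general F K hn).trans_eq h0)
end
end
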